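/- (Validity of the conditional independence test in a stationary non-reactive environment, Theorem 1 combined with Proposition 1.) Suppose the law of the data D over trajectories has probability mass function f(d) = ∏_{t=1}^T pC(c_t) · a_t(x_t; c_t, h_{t−1}(d)) · r(y_t; c_t, x_t), where pC : 𝒞 → ℝ≥0 is the (time-invariant) context law and r : 𝒴 × 𝒞 × 𝒳 → ℝ≥0 is the (time-invariant) response law satisfying the null H₀^{⊥⊥,g}: r(y; c, x) = r(y; c, x') whenever g(x) = g(x'). Take f̂(d) = ∏_{t=1}^T a_t(x_t; c_t, h_{t−1}(d)), and let q be any resampling distribution such that q(d̃ | d) > 0 implies there exists a permutation π of {1, …, T} with (c̃_t, g(x̃_t), ỹ_t) = (c_{π(t)}, g(x_{π(t)}), y_{π(t)}) for all t. Then for every α ∈ [0,1], the weighted MC randomization p-value is valid: Σ_{(d₀,…,d_m) : p(d₀,…,d_m) ≤ α} h(d₀,…,d_m) ≤ α. -/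

import Mathlib

open scoped NNReal Classical BigOperators

noncomputable section

/-! Generic weighted MC randomization test machinery. -/

/-- The joint law of the tuple: `h(d₀, …, d_m) = f(d₀) · ∏_{k=1}^m q(d_k | d₀)`. -/
def jointLaw {D : Type*} (f : D → ℝ≥0) (q : D → D → ℝ≥0) (m : ℕ)
    (d : Fin (m + 1) → D) : ℝ≥0 :=
  f (d 0) * ∏ k ∈ Finset.univ.erase (0 : Fin (m + 1)), q (d k) (d 0)

/-- Numerator of the weight `w_i`: `f̂(d_i) · ∏_{k ≠ i} q(d_k | d_i)`. -/
def wNum {D : Type*} (q : D → D → ℝ≥0) (fhat : D → ℝ≥0) (m : ℕ)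
    (i : Fin (m + 1)) (d : Fin (m + 1) → D) : ℝ≥0 :=
  fhat (d i) * ∏ k ∈ Finset.univ.erase i, q (d k) (d i)

/-- The weight `w_i`; in `ℝ≥0` division by zero yields `0`. -/
def weight {D : Type*} (q : D → D → ℝ≥0) (fhat : D → ℝ≥0) (m : ℕ)
    (i : Fin (m + 1)) (d : Fin (m + 1) → D) : ℝ≥0 :=
  wNum q fhat m i d / ∑ j, wNum q fhat m j d

/-- The weighted MC randomization p-value. -/
def pValue {D : Type*} (q : D → D → ℝ≥0) (fhat : D → ℝ≥0) (m : ℕ)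
    (S : D → ℝ) (d : Fin (m + 1) → D) : ℝ≥0 :=
  ∑ i, weight q fhat m i d * (if S (d 0) ≤ S (d i) then 1 else 0)

/-! Trajectory machinery. -/

variable {C X Y : Type*}

/-- Embedding of an index `s < t` into `Fin T`. -/
def emb {T : ℕ} (t : Fin T) (s : Fin (t : ℕ)) : Fin T :=
  ⟨(s : ℕ), lt_trans s.isLt t.isLt⟩

/-- The history `h_{t−1}(d)`. -/
def hist {T : ℕ} (d : Fin T → C × X × Y) (t : Fin T) : Fin (t : ℕ) → C × X × Y :=
  fun s => d (emb t s)

/-- `f̂(d) = ∏_{t=1}^T a_t(x_t; c_t, h_{t−1}(d))`. -/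
def assignLik {T : ℕ} (a : (t : Fin T) → X → C → (Fin (t : ℕ) → C × X × Y) → ℝ≥0)
    (d : Fin T → C × X × Y) : ℝ≥0 :=
  ∏ t, a t (d t).2.1 (d t).1 (hist d t)

/-- The data law in a `C`-stationary strongly non-reactive environment under the
stationarity null `H₀^S`: `f(d) = ∏_t pC(c_t) · a_t(x_t; c_t, h_{t−1}(d)) ·
r(y_t; c_t, x_t)` with `pC` and `r` not depending on `t`. -/
def statTrajLaw {T : ℕ}
    (pC : C → ℝ≥0)
    (a : (t : Fin T) → X → C → (Fin (t : ℕ) → C × X × Y) → ℝ≥0)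
    (r : Y → C → X → ℝ≥0)
    (d : Fin T → C × X × Y) : ℝ≥0 :=
  ∏ t, pC (d t).1 * a t (d t).2.1 (d t).1 (hist d t) *
    r (d t).2.2 (d t).1 (d t).2.1

/-!
Write `N_i(d) = f(d_i) ∏_{k ≠ i} q(d_k | d_i)`, so that the joint law is `h = N_0`. The data law
factors as `f = f̂ · ρ`, where `ρ` collects the context and response probabilities. Under the null,
`ρ` takes the same value on a data set and on its resamples, so it cancels from the weights and
`N_i = w_i · ∑_j N_j`. Let `p_i` be the p-value computed with `d_i` as the observed data. Exchanging
the coordinates `0` and `j` then gives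

  `∑_d 1[p_0 ≤ α] N_0 = ∑_j ∑_d 1[p_0 ≤ α] w_0 N_j = ∑_j ∑_d 1[p_j ≤ α] w_j N_0`,

and `∑_j 1[p_j ≤ α] w_j ≤ α` holds pointwise, because every `j` with `p_j ≤ α` is counted in the
p-value of the rejected index whose statistic is smallest. Since `∑_d N_0 = 1`, the bound follows.
-/

open scoped ENNReal

section TailSums

variable {ι M R : Type*} [Fintype ι] [LinearOrder R]
  [AddCommMonoid M] [PartialOrder M] [CanonicallyOrderedAdd M]

lemma sum_filter_upperTail_le (w : ι → M) (s : ι → R) (α : M) :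
    ∑ i with ∑ j with s i ≤ s j, w j ≤ α, w i ≤ α := by
  rcases Finset.eq_empty_or_nonempty {i | ∑ j with s i ≤ s j, w j ≤ α} with hempty | hne
  · simp [hempty]
  · obtain ⟨i₀, hi₀, hmin⟩ := Finset.exists_min_image _ s hne
    calc ∑ i with ∑ j with s i ≤ s j, w j ≤ α, w i
        ≤ ∑ j with s i₀ ≤ s j, w j :=
          Finset.sum_le_sum_of_subset fun j hj =>
            Finset.mem_filter.2 ⟨Finset.mem_univ j, hmin j hj⟩
      _ ≤ α := (Finset.mem_filter.1 hi₀).2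

end TailSums

section InfiniteSums

lemma tsum_coe_eq_one_of_tsum_eq_one {β : Type*} {p : β → ℝ≥0} (hp : ∑' b, p b = 1) :
    ∑' b, (p b : ℝ≥0∞) = 1 := by
  rwa [NNReal.tsum_eq_toNNReal_tsum, ENNReal.toNNReal_eq_one_iff] at hp

lemma tsum_prod_eq_prod_tsum {n : ℕ} {β : Fin n → Type*} (p : (k : Fin n) → β k → ℝ≥0∞) :
    ∑' d : (k : Fin n) → β k, ∏ k, p k (d k) = ∏ k, ∑' b, p k b := by
  induction n with
  | zero => simp
  | succ n ih =>
    rw [← (Fin.consEquiv β).tsum_eq, ENNReal.tsum_prod']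
    simp only [Fin.consEquiv_apply, Fin.prod_univ_succ, Fin.cons_zero, Fin.cons_succ,
      ENNReal.tsum_mul_left, ENNReal.tsum_mul_right, ih]

lemma tsum_comp_perm {ι β M : Type*} [AddCommMonoid M] [TopologicalSpace M]
    (σ : Equiv.Perm ι) (F : (ι → β) → M) : ∑' d, F (d ∘ σ) = ∑' d, F d :=
  (σ.symm.arrowCongr (Equiv.refl β)).tsum_eq F

end InfiniteSums

section RandomizationTest

variable {D : Type*} {m : ℕ} {q : D → D → ℝ≥0} {fhat ρ : D → ℝ≥0}

/-- The p-value computed as if the `i`-th data set were the observed one; `pValue` is the case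
`i = 0`. -/
def pValueAt (q : D → D → ℝ≥0) (fhat : D → ℝ≥0) (m : ℕ) (S : D → ℝ)
    (i : Fin (m + 1)) (d : Fin (m + 1) → D) : ℝ≥0 :=
  ∑ j with S (d i) ≤ S (d j), weight q fhat m j d

/-- The weight of the `i`-th data set if the level-`α` test with that data set as the observed one
rejects, and `0` otherwise. -/
def rejectedWeight (q : D → D → ℝ≥0) (fhat : D → ℝ≥0) (m : ℕ) (S : D → ℝ) (α : ℝ≥0)
    (i : Fin (m + 1)) (d : Fin (m + 1) → D) : ℝ≥0 :=
  if pValueAt q fhat m S i d ≤ α then weight q fhat m i d else 0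

lemma pValue_eq_pValueAt_zero (S : D → ℝ) (d : Fin (m + 1) → D) :
    pValue q fhat m S d = pValueAt q fhat m S 0 d := by
  simp only [pValue, pValueAt, Finset.sum_filter, mul_ite, mul_one, mul_zero]

lemma wNum_zero (f : D → ℝ≥0) (d : Fin (m + 1) → D) : wNum q f m 0 d = jointLaw f q m d :=
  rfl

lemma wNum_comp_perm (σ : Equiv.Perm (Fin (m + 1))) (i : Fin (m + 1)) (d : Fin (m + 1) → D) :
    wNum q fhat m i (d ∘ σ) = wNum q fhat m (σ i) d := by
  have hprod : ∏ k ∈ Finset.univ.erase i, q (d (σ k)) (d (σ i)) =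
      ∏ k ∈ Finset.univ.erase (σ i), q (d k) (d (σ i)) :=
    Finset.prod_equiv σ (by simp) fun _ _ => rfl
  simp only [wNum, Function.comp_apply, hprod]

lemma weight_comp_perm (σ : Equiv.Perm (Fin (m + 1))) (i : Fin (m + 1))
    (d : Fin (m + 1) → D) : weight q fhat m i (d ∘ σ) = weight q fhat m (σ i) d := by
  simp only [weight, wNum_comp_perm, Equiv.sum_comp σ fun j => wNum q fhat m j d]

lemma pValueAt_comp_perm (S : D → ℝ) (σ : Equiv.Perm (Fin (m + 1))) (i : Fin (m + 1))
    (d : Fin (m + 1) → D) : pValueAt q fhat m S i (d ∘ σ) = pValueAt q fhat m S (σ i) d :=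
  Finset.sum_equiv σ (by simp) fun j _ => weight_comp_perm σ j d

lemma rejectedWeight_comp_perm (S : D → ℝ) (α : ℝ≥0) (σ : Equiv.Perm (Fin (m + 1)))
    (i : Fin (m + 1)) (d : Fin (m + 1) → D) :
    rejectedWeight q fhat m S α i (d ∘ σ) = rejectedWeight q fhat m S α (σ i) d := by
  simp only [rejectedWeight, pValueAt_comp_perm, weight_comp_perm]

lemma sum_rejectedWeight_le (S : D → ℝ) (α : ℝ≥0) (d : Fin (m + 1) → D) :
    ∑ i, rejectedWeight q fhat m S α i d ≤ α := by
  simpa only [rejectedWeight, pValueAt, Finset.sum_filter] using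
    sum_filter_upperTail_le (fun i => weight q fhat m i d) (fun i => S (d i)) α

lemma wNum_mul (i : Fin (m + 1)) (d : Fin (m + 1) → D) :
    wNum q (fhat * ρ) m i d = wNum q fhat m i d * ρ (d i) := by
  simp only [wNum, Pi.mul_apply, mul_right_comm]

lemma apply_eq_of_wNum_ne_zero {β : Type*} {φ : D → β} (hφ : ∀ d e, 0 < q e d → φ e = φ d)
    {i : Fin (m + 1)} {d : Fin (m + 1) → D} (hi : wNum q fhat m i d ≠ 0) (k : Fin (m + 1)) :
    φ (d k) = φ (d i) := by
  obtain rfl | hki := eq_or_ne k i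
  · rfl
  · have hprod := Finset.prod_ne_zero_iff.1 (right_ne_zero_of_mul hi)
    exact hφ _ _ (pos_iff_ne_zero.2 (hprod k (Finset.mem_erase.2 ⟨hki, Finset.mem_univ k⟩)))

lemma wNum_mul_eq_weight_mul_sum (hρ : ∀ d e, 0 < q e d → ρ e = ρ d) (i : Fin (m + 1))
    (d : Fin (m + 1) → D) :
    wNum q (fhat * ρ) m i d = weight q fhat m i d * ∑ j, wNum q (fhat * ρ) m j d := by
  simp only [wNum_mul]
  by_cases hsum : ∑ j, wNum q fhat m j d = 0
  · have hi : wNum q fhat m i d = 0 := Finset.sum_eq_zero_iff.1 hsum i (Finset.mem_univ i)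
    simp [weight, hi]
  · obtain ⟨j₀, -, hj₀⟩ := Finset.exists_ne_zero_of_sum_ne_zero hsum
    simp only [apply_eq_of_wNum_ne_zero hρ hj₀]
    rw [← Finset.sum_mul, weight, ← mul_assoc, div_mul_cancel₀ _ hsum]

lemma jointLaw_cons (f : D → ℝ≥0) (q : D → D → ℝ≥0) (e : D) (d : Fin m → D) :
    jointLaw f q m (Fin.cons e d : Fin (m + 1) → D) = f e * ∏ k, q (d k) e := by
  have herase : Finset.univ.erase (0 : Fin (m + 1)) = Finset.univ.map (Fin.succEmb m) := by
    rw [Fin.univ_succ, Finset.erase_cons]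
    rfl
  simp only [jointLaw, herase, Finset.prod_map, Fin.coe_succEmb, Fin.cons_zero, Fin.cons_succ]

lemma tsum_jointLaw (f : D → ℝ≥0) (hq : ∀ d, ∑' e, (q e d : ℝ≥0∞) = 1) :
    ∑' d, (jointLaw f q m d : ℝ≥0∞) = ∑' d, (f d : ℝ≥0∞) := by
  have hresample (e : D) : ∑' d : Fin m → D, ∏ k, (q (d k) e : ℝ≥0∞) = 1 := by
    simp only [tsum_prod_eq_prod_tsum fun _ b => (q b e : ℝ≥0∞), hq, Finset.prod_const_one]
  calc ∑' d, (jointLaw f q m d : ℝ≥0∞)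
      = ∑' (e) (d : Fin m → D), (jointLaw f q m (Fin.cons e d : Fin (m + 1) → D) : ℝ≥0∞) := by
        rw [← (Fin.consEquiv fun _ => D).tsum_eq, ENNReal.tsum_prod']
        rfl
    _ = ∑' e, (f e : ℝ≥0∞) := by
        simp only [jointLaw_cons, ENNReal.coe_mul, ENNReal.ofNNReal_finsetProd,
          ENNReal.tsum_mul_left, hresample, mul_one]

lemma ite_pValue_le_jointLaw_eq (hρ : ∀ d e, 0 < q e d → ρ e = ρ d) (S : D → ℝ) (α : ℝ≥0)
    (d : Fin (m + 1) → D) :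
    (if pValue q fhat m S d ≤ α then jointLaw (fhat * ρ) q m d else 0) =
      ∑ j, rejectedWeight q fhat m S α 0 d * wNum q (fhat * ρ) m j d := by
  rw [← Finset.mul_sum, rejectedWeight, ite_mul, zero_mul, pValue_eq_pValueAt_zero,
    ← wNum_mul_eq_weight_mul_sum hρ, wNum_zero]

lemma tsum_rejectedWeight_mul_wNum (f : D → ℝ≥0) (S : D → ℝ) (α : ℝ≥0) (j : Fin (m + 1)) :
    ∑' d, (rejectedWeight q fhat m S α 0 d * wNum q f m j d : ℝ≥0∞) =
      ∑' d, (rejectedWeight q fhat m S α j d * jointLaw f q m d : ℝ≥0∞) := by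
  rw [← tsum_comp_perm (Equiv.swap 0 j)]
  simp only [rejectedWeight_comp_perm, wNum_comp_perm, Equiv.swap_apply_left,
    Equiv.swap_apply_right, wNum_zero]

lemma tsum_ite_pValue_le_jointLaw_le (hρ : ∀ d e, 0 < q e d → ρ e = ρ d) (S : D → ℝ)
    (α : ℝ≥0) :
    ∑' d, ((if pValue q fhat m S d ≤ α then jointLaw (fhat * ρ) q m d else 0 : ℝ≥0) : ℝ≥0∞) ≤
      α * ∑' d, (jointLaw (fhat * ρ) q m d : ℝ≥0∞) := by
  calc _ = ∑' d, ∑ j, (rejectedWeight q fhat m S α 0 d * wNum q (fhat * ρ) m j d : ℝ≥0∞) := by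
        simp only [ite_pValue_le_jointLaw_eq hρ, ENNReal.ofNNReal_finsetSum, ENNReal.coe_mul]
    _ = ∑ j, ∑' d, (rejectedWeight q fhat m S α 0 d * wNum q (fhat * ρ) m j d : ℝ≥0∞) :=
        Summable.tsum_finsetSum fun _ _ => ENNReal.summable
    _ = ∑ j, ∑' d, (rejectedWeight q fhat m S α j d * jointLaw (fhat * ρ) q m d : ℝ≥0∞) := by
        simp only [tsum_rejectedWeight_mul_wNum]
    _ = ∑' d, ((∑ j, rejectedWeight q fhat m S α j d : ℝ≥0) : ℝ≥0∞) *
          jointLaw (fhat * ρ) q m d := by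
        simp only [ENNReal.ofNNReal_finsetSum, Finset.sum_mul]
        exact (Summable.tsum_finsetSum fun _ _ => ENNReal.summable).symm
    _ ≤ ∑' d, (α * jointLaw (fhat * ρ) q m d : ℝ≥0∞) := by
        gcongr with d
        exact sum_rejectedWeight_le S α d
    _ = α * ∑' d, (jointLaw (fhat * ρ) q m d : ℝ≥0∞) := ENNReal.tsum_mul_left

theorem weighted_randomization_test_valid (hf : ∑' d, (fhat * ρ) d = 1)
    (hq : ∀ d, ∑' e, q e d = 1) (hρ : ∀ d e, 0 < q e d → ρ e = ρ d) (S : D → ℝ) (α : ℝ≥0) :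
    (∑' d, if pValue q fhat m S d ≤ α then jointLaw (fhat * ρ) q m d else 0) ≤ α := by
  have htotal : ∑' d, (jointLaw (fhat * ρ) q m d : ℝ≥0∞) = 1 :=
    (tsum_jointLaw _ fun d => tsum_coe_eq_one_of_tsum_eq_one (hq d)).trans
      (tsum_coe_eq_one_of_tsum_eq_one hf)
  rw [NNReal.tsum_eq_toNNReal_tsum]
  refine ENNReal.toNNReal_mono ENNReal.coe_ne_top ?_
  exact (tsum_ite_pValue_le_jointLaw_le hρ S α).trans_eq (by rw [htotal, mul_one])

end RandomizationTest

section Trajectories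

variable {G : Type*} {T : ℕ}

/-- The likelihood of the contexts and of the responses given contexts and actions: the part of
`statTrajLaw` that does not involve the assignment algorithm. -/
def environmentLik (pC : C → ℝ≥0) (r : Y → C → X → ℝ≥0) (d : Fin T → C × X × Y) : ℝ≥0 :=
  ∏ t, pC (d t).1 * r (d t).2.2 (d t).1 (d t).2.1

lemma statTrajLaw_eq_assignLik_mul_environmentLik (pC : C → ℝ≥0)
    (a : (t : Fin T) → X → C → (Fin (t : ℕ) → C × X × Y) → ℝ≥0) (r : Y → C → X → ℝ≥0) :
    statTrajLaw pC a r = assignLik a * environmentLik pC r := by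
  funext d
  simp only [statTrajLaw, assignLik, environmentLik, Pi.mul_apply, ← Finset.prod_mul_distrib,
    mul_assoc, mul_left_comm]

lemma environmentLik_eq_of_perm (pC : C → ℝ≥0) {r : Y → C → X → ℝ≥0} {g : X → G}
    (hnull : ∀ (y : Y) (c : C) (x x' : X), g x = g x' → r y c x = r y c x')
    {d e : Fin T → C × X × Y} (π : Equiv.Perm (Fin T))
    (hπ : ∀ t, (e t).1 = (d (π t)).1 ∧ g (e t).2.1 = g (d (π t)).2.1 ∧
      (e t).2.2 = (d (π t)).2.2) :
    environmentLik pC r e = environmentLik pC r d := by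
  refine Fintype.prod_equiv π _ _ fun t => ?_
  obtain ⟨hcontext, haction, hresponse⟩ := hπ t
  rw [hcontext, hresponse, hnull _ _ _ _ haction]

theorem conditional_independence_test_valid_general (pC : C → ℝ≥0)
    (a : (t : Fin T) → X → C → (Fin (t : ℕ) → C × X × Y) → ℝ≥0) (r : Y → C → X → ℝ≥0)
    (g : X → G) (hnull : ∀ (y : Y) (c : C) (x x' : X), g x = g x' → r y c x = r y c x')
    (q : (Fin T → C × X × Y) → (Fin T → C × X × Y) → ℝ≥0) (m : ℕ)
    (S : (Fin T → C × X × Y) → ℝ)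
    (hf : ∑' d, statTrajLaw pC a r d = 1) (hq : ∀ d, ∑' e, q e d = 1)
    (hperm : ∀ d dtil, 0 < q dtil d →
      ∃ π : Equiv.Perm (Fin T), ∀ t,
        (dtil t).1 = (d (π t)).1 ∧ g (dtil t).2.1 = g (d (π t)).2.1 ∧
          (dtil t).2.2 = (d (π t)).2.2)
    (α : ℝ≥0) :
    (∑' dd : Fin (m + 1) → (Fin T → C × X × Y),
      if pValue q (assignLik a) m S dd ≤ α then
        jointLaw (statTrajLaw pC a r) q m dd
      else 0) ≤ α := by
  rw [statTrajLaw_eq_assignLik_mul_environmentLik] at hf ⊢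
  refine weighted_randomization_test_valid hf hq (fun d dtil hpos => ?_) S α
  obtain ⟨π, hπ⟩ := hperm d dtil hpos
  exact environmentLik_eq_of_perm pC hnull π hπ

end Trajectories

/-- **(Validity of the conditional independence test in a stationary non-reactive
environment, Theorem 1 combined with Proposition 1.)** Under the null
`H₀^{⊥⊥,g}` (the time-invariant response law `r` depends on the action only
through `g`), with `f̂ = assignLik a` and a resampling distribution `q` each of
whose positive-probability draws agrees with some permutation of the observed
trajectory in contexts, responses, and `g`-evaluations of actions, the weighted
MC randomization p-value is valid. -/
theorem conditional_independence_test_valid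
    {G : Type*} [Countable C] [Countable X] [Countable Y]
    (T : ℕ) (hT : 1 ≤ T)
    (pC : C → ℝ≥0)
    (a : (t : Fin T) → X → C → (Fin (t : ℕ) → C × X × Y) → ℝ≥0)
    (r : Y → C → X → ℝ≥0)
    (g : X → G)
    (hnull : ∀ (y : Y) (c : C) (x x' : X), g x = g x' → r y c x = r y c x')
    (q : (Fin T → C × X × Y) → (Fin T → C × X × Y) → ℝ≥0)
    (m : ℕ) (hm : 1 ≤ m)
    (S : (Fin T → C × X × Y) → ℝ)
    (hf : ∑' d, statTrajLaw pC a r d = 1)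
    (hq : ∀ d, ∑' e, q e d = 1)
    (hperm : ∀ d dtil, 0 < q dtil d →
      ∃ π : Equiv.Perm (Fin T), ∀ t,
        (dtil t).1 = (d (π t)).1 ∧ g (dtil t).2.1 = g (d (π t)).2.1 ∧
          (dtil t).2.2 = (d (π t)).2.2) :
    ∀ α : ℝ≥0, α ≤ 1 →
      (∑' dd : Fin (m + 1) → (Fin T → C × X × Y),
        if pValue q (assignLik a) m S dd ≤ α then
          jointLaw (statTrajLaw pC a r) q m dd
        else 0) ≤ α := fun α _ =>
  conditional_independence_test_valid_general pC a r g hnull q m S hf hq hperm α
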